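/- Let N ≥ 1 and let g be a norm on EuclideanSpace ℝ (Fin N). Let W be the set of all x with g(x) = 1 that admit at least two distinct norming functionals with respect to g. Then the (N−1)-dimensional Hausdorff measure of W (taken with respect to the Euclidean metric) is zero. -/

import Mathlib

open MeasureTheory
open scoped RealInnerProductSpace

/-- `g` is a norm on `EuclideanSpace ℝ (Fin N)`. -/
def IsNorm {N : ℕ} (g : EuclideanSpace ℝ (Fin N) → ℝ) : Prop :=
  (∀ x y, g (x + y) ≤ g x + g y) ∧
  (∀ (c : ℝ) (x), g (c • x) = |c| * g x) ∧
  (∀ x, g x = 0 → x = 0)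

/-- `f` is a norming functional for `x` with respect to `g`:
`⟨f, x⟩ = g x` and `⟨f, y⟩ ≤ g y` for all `y`, where `⟨·,·⟩` is the Euclidean
inner product. -/
def IsNormingFunctional {N : ℕ} (g : EuclideanSpace ℝ (Fin N) → ℝ)
    (f x : EuclideanSpace ℝ (Fin N)) : Prop :=
  ⟪f, x⟫ = g x ∧ ∀ y, ⟪f, y⟫ ≤ g y

lemma IsNorm.zero' {N : ℕ} {g : EuclideanSpace ℝ (Fin N) → ℝ} (hg : IsNorm g) : g 0 = 0 := by
  have := hg.2.1 0 0
  simpa using this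

lemma IsNorm.neg' {N : ℕ} {g : EuclideanSpace ℝ (Fin N) → ℝ} (hg : IsNorm g)
    (x : EuclideanSpace ℝ (Fin N)) : g (-x) = g x := by
  have := hg.2.1 (-1) x
  simpa using this

lemma IsNorm.nonneg' {N : ℕ} {g : EuclideanSpace ℝ (Fin N) → ℝ} (hg : IsNorm g)
    (x : EuclideanSpace ℝ (Fin N)) : 0 ≤ g x := by
  have h := hg.1 x (-x)
  rw [hg.neg', add_neg_cancel, hg.zero'] at h
  linarith

lemma IsNorm.exists_lipschitz {N : ℕ} {g : EuclideanSpace ℝ (Fin N) → ℝ} (hg : IsNorm g) :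
    ∃ L : ℝ, 0 ≤ L ∧ ∀ x y, |g x - g y| ≤ L * ‖x - y‖ := by
  set b := EuclideanSpace.basisFun (Fin N) ℝ with hb
  have hL : ∀ x, g x ≤ (∑ i, g (b i)) * ‖x‖ := by
    intro x
    have h1 : g (∑ i, ⟪b i, x⟫ • b i) ≤ ∑ i, g (⟪b i, x⟫ • b i) :=
      Finset.le_sum_of_subadditive g hg.zero'.le hg.1 _ _
    rw [b.sum_repr' x] at h1
    refine h1.trans ?_
    rw [Finset.sum_mul]
    refine Finset.sum_le_sum fun i _ => ?_
    rw [hg.2.1, mul_comm]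
    refine mul_le_mul_of_nonneg_left ?_ (hg.nonneg' _)
    have := abs_real_inner_le_norm (b i) x
    rwa [b.norm_eq_one, one_mul] at this
  refine ⟨∑ i, g (b i), Finset.sum_nonneg fun i _ => hg.nonneg' _, fun x y => ?_⟩
  rw [abs_le]
  have h1 := hg.1 (x - y) y
  have h2 := hg.1 (y - x) x
  rw [sub_add_cancel] at h1 h2
  have h3 := hL (x - y)
  have h4 := hL (y - x)
  rw [norm_sub_rev] at h4
  constructor <;> linarith

lemma IsNorm.exists_lower {N : ℕ} {g : EuclideanSpace ℝ (Fin N) → ℝ} (hg : IsNorm g) :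
    ∃ c : ℝ, 0 < c ∧ ∀ x, c * ‖x‖ ≤ g x := by
  obtain ⟨L, hL0, hL⟩ := hg.exists_lipschitz
  have hcont : Continuous g :=
    (LipschitzWith.of_dist_le_mul (K := ⟨L, hL0⟩) fun x y => by
      rw [Real.dist_eq, dist_eq_norm]; exact hL x y).continuous
  rcases (Metric.sphere (0 : EuclideanSpace ℝ (Fin N)) 1).eq_empty_or_nonempty with he | hne
  · refine ⟨1, one_pos, fun x => ?_⟩
    by_cases hx : x = 0
    · simp [hx, hg.zero']
    · exfalso
      have : (‖x‖⁻¹ • x) ∈ Metric.sphere (0 : EuclideanSpace ℝ (Fin N)) 1 := by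
        simp [norm_smul, hx]
      rw [he] at this
      exact this
  · obtain ⟨z, hz, hmin⟩ := (isCompact_sphere (0 : EuclideanSpace ℝ (Fin N)) 1).exists_isMinOn hne
      hcont.continuousOn
    have hz1 : ‖z‖ = 1 := by simpa using hz
    have hgz : 0 < g z := by
      refine lt_of_le_of_ne (hg.nonneg' z) fun h => ?_
      have := hg.2.2 z h.symm
      simp [this] at hz1
    refine ⟨g z, hgz, fun x => ?_⟩
    by_cases hx : x = 0
    · simp [hx, hg.zero']
    · have hx' : 0 < ‖x‖ := norm_pos_iff.2 hx
      have hmem : (‖x‖⁻¹ • x) ∈ Metric.sphere (0 : EuclideanSpace ℝ (Fin N)) 1 := by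
        simp [norm_smul, hx]
      have h := hmin hmem
      simp only [Set.mem_setOf_eq] at h
      rw [hg.2.1, abs_of_pos (inv_pos.2 hx'), inv_mul_eq_div, le_div_iff₀ hx'] at h
      exact h

lemma half_null {N : ℕ} (hN : 1 ≤ N)
    (g : EuclideanSpace ℝ (Fin N) → ℝ) (hg : IsNorm g) (e : EuclideanSpace ℝ (Fin N))
    (he : ‖e‖ = 1) :
    μH[N - 1] {x : EuclideanSpace ℝ (Fin N) | 0 < ⟪e, x⟫ ∧ g x = 1 ∧
      ∃ f f', f ≠ f' ∧ IsNormingFunctional g f x ∧ IsNormingFunctional g f' x} = 0 := by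
  obtain ⟨L, hL0, hL⟩ := hg.exists_lipschitz
  obtain ⟨c, hc, hlow⟩ := hg.exists_lower
  have he0 : e ≠ 0 := by rintro rfl; simp at he
  have hee : ⟪e, e⟫ = 1 := by rw [real_inner_self_eq_norm_sq, he]; norm_num
  let U : Submodule ℝ (EuclideanSpace ℝ (Fin N)) := (ℝ ∙ e)ᗮ
  have hUe : ∀ u : U, ⟪e, (u : EuclideanSpace ℝ (Fin N))⟫ = 0 := fun u =>
    Submodule.mem_orthogonal_singleton_iff_inner_right.1 u.2
  have hdim : ((Module.finrank ℝ U : ℕ) : ℝ) = N - 1 := by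
    have h1 := Submodule.finrank_add_finrank_orthogonal (ℝ ∙ e)
    rw [finrank_span_singleton he0, finrank_euclideanSpace_fin] at h1
    have h2 : (1 : ℝ) + (Module.finrank ℝ U : ℕ) = N := by exact_mod_cast h1
    linarith
  -- the Lipschitz function on the hyperplane
  let h : U → ℝ := fun u => g (e + u)
  have hhL : LipschitzWith ⟨L, hL0⟩ h := by
    refine LipschitzWith.of_dist_le_mul fun u v => ?_
    rw [Real.dist_eq, dist_eq_norm]
    refine (hL _ _).trans_eq ?_
    rw [add_sub_add_left_eq_sub]
    rfl
  have hae : ∀ᵐ u ∂(μH[Module.finrank ℝ U] : Measure U), DifferentiableAt ℝ h u :=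
    hhL.ae_differentiableAt
  have hnorm1 : ∀ u : U, 1 ≤ ‖e + (u : EuclideanSpace ℝ (Fin N))‖ := by
    intro u
    have h1 := real_inner_le_norm e (e + (u : EuclideanSpace ℝ (Fin N)))
    rw [inner_add_right, hUe, hee, he] at h1
    linarith
  have hpos : ∀ u : U, c ≤ g (e + u) := fun u => by
    have h1 := hlow (e + u)
    nlinarith [hnorm1 u]
  let p : U → EuclideanSpace ℝ (Fin N) := fun u => (g (e + u))⁻¹ • (e + (u : EuclideanSpace ℝ (Fin N)))
  have hK0 : 0 ≤ 1 / c + L / (c * c) := by positivity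
  have hpL : LipschitzWith ⟨1 / c + L / (c * c), hK0⟩ p := by
    refine LipschitzWith.of_dist_le_mul fun u v => ?_
    rw [dist_eq_norm, dist_eq_norm]
    change ‖(g (e + u))⁻¹ • (e + (u : EuclideanSpace ℝ (Fin N))) -
      (g (e + v))⁻¹ • (e + (v : EuclideanSpace ℝ (Fin N)))‖ ≤ (1 / c + L / (c * c)) * ‖u - v‖
    have hn : ‖u - v‖ = ‖(e + (u : EuclideanSpace ℝ (Fin N))) - (e + v)‖ := by
      rw [add_sub_add_left_eq_sub]; rfl
    rw [hn]
    have ha := hpos u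
    have hb := hpos v
    have hb' := hlow (e + v)
    generalize e + (u : EuclideanSpace ℝ (Fin N)) = x at *
    generalize e + (v : EuclideanSpace ℝ (Fin N)) = y at *
    have hx0 : 0 < g x := hc.trans_le ha
    have hy0 : 0 < g y := hc.trans_le hb
    have hdec : (g x)⁻¹ • x - (g y)⁻¹ • y =
        (g x)⁻¹ • (x - y) + ((g y - g x) / (g x * g y)) • y := by
      have : (g y - g x) / (g x * g y) = (g x)⁻¹ - (g y)⁻¹ := by field_simp
      rw [this, smul_sub, sub_smul]; abel
    rw [hdec]
    refine (norm_add_le _ _).trans ?_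
    rw [add_mul, norm_smul, norm_smul, Real.norm_eq_abs, Real.norm_eq_abs,
      abs_of_pos (inv_pos.2 hx0), abs_div, abs_of_pos (mul_pos hx0 hy0)]
    refine add_le_add ?_ ?_
    · rw [one_div]
      gcongr
    · have h1 : |g y - g x| ≤ L * ‖x - y‖ := by rw [abs_sub_comm]; exact hL x y
      have h2 : ‖y‖ / g y ≤ 1 / c := by
        rw [div_le_div_iff₀ hy0 hc]; linarith
      calc |g y - g x| / (g x * g y) * ‖y‖ = |g y - g x| / g x * (‖y‖ / g y) := by
            field_simp
        _ ≤ (L * ‖x - y‖) / c * (1 / c) := by gcongr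
        _ = L / (c * c) * ‖x - y‖ := by field_simp
  have hnull : μH[N - 1] (p '' {u | ¬ DifferentiableAt ℝ h u}) = 0 := by
    rw [← hdim]
    have h1 := hpL.hausdorffMeasure_image_le (d := (Module.finrank ℝ U : ℕ)) (by positivity)
      {u | ¬ DifferentiableAt ℝ h u}
    have h2 : μH[(Module.finrank ℝ U : ℕ)] {u | ¬ DifferentiableAt ℝ h u} = 0 := hae
    rw [h2, mul_zero] at h1
    exact le_antisymm h1 bot_le
  refine measure_mono_null ?_ hnull
  rintro x ⟨hex, hgx, f, f', hff, hf, hf'⟩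
  set t : ℝ := ⟪e, x⟫⁻¹ with ht
  have ht0 : 0 < t := inv_pos.2 hex
  let u : U := ⟨t • x - e, Submodule.mem_orthogonal_singleton_iff_inner_right.2 (by
    rw [inner_sub_right, inner_smul_right, hee, ht, inv_mul_cancel₀ hex.ne', sub_self])⟩
  have heu : e + (u : EuclideanSpace ℝ (Fin N)) = t • x := by
    change e + (t • x - e) = t • x
    abel
  have hgt : g (t • x) = t := by rw [hg.2.1, hgx, abs_of_pos ht0, mul_one]
  refine ⟨u, ?_, ?_⟩
  swap
  · change (g (e + u))⁻¹ • (e + (u : EuclideanSpace ℝ (Fin N))) = x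
    rw [heu, hgt, smul_smul, inv_mul_cancel₀ ht0.ne', one_smul]
  intro hd
  have key : ∀ f, IsNormingFunctional g f x → ∀ v : U,
      fderiv ℝ h u v = ⟪f, (v : EuclideanSpace ℝ (Fin N))⟫ := by
    intro f hf v
    have hlin : HasFDerivAt (fun w : U => ⟪f, (w : EuclideanSpace ℝ (Fin N))⟫)
        ((innerSL ℝ f).comp U.subtypeL) u :=
      ((innerSL ℝ f).comp U.subtypeL).hasFDerivAt
    have hmin : IsLocalMin (fun w : U => h w - ⟪f, (w : EuclideanSpace ℝ (Fin N))⟫) u := by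
      refine Filter.Eventually.of_forall fun w => ?_
      have h1 := hf.2 (e + w)
      have h2 : ⟪f, e + (u : EuclideanSpace ℝ (Fin N))⟫ = g (e + u) := by
        rw [heu, hgt, inner_smul_right, hf.1, hgx, mul_one]
      rw [inner_add_right] at h1 h2
      change g (e + u) - _ ≤ g (e + w) - _
      linarith
    have h0 := hmin.hasFDerivAt_eq_zero (hd.hasFDerivAt.sub hlin)
    have h1 := congrArg (fun T => T v) h0
    simp only [ContinuousLinearMap.sub_apply, ContinuousLinearMap.zero_apply] at h1
    exact sub_eq_zero.1 h1
  apply hff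
  have hperp : ∀ v ∈ U, ⟪f - f', v⟫ = 0 := by
    intro v hv
    have h1 := key f hf ⟨v, hv⟩
    have h2 := key f' hf' ⟨v, hv⟩
    rw [inner_sub_left]
    exact sub_eq_zero.2 (h1.symm.trans h2)
  have hx0 : ⟪f - f', x⟫ = 0 := by rw [inner_sub_left, hf.1, hf'.1, sub_self]
  have hfe : ⟪f - f', e⟫ = 0 := by
    have h1 := hperp u u.2
    have h2 : e = t • x - u := by rw [← heu]; abel
    rw [h2, inner_sub_right, inner_smul_right, hx0, h1]; simp
  have hall : ∀ y, ⟪f - f', y⟫ = 0 := by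
    intro y
    have hy : y - ⟪e, y⟫ • e ∈ U := Submodule.mem_orthogonal_singleton_iff_inner_right.2 (by
      rw [inner_sub_right, inner_smul_right, hee, mul_one, sub_self])
    have h1 := hperp _ hy
    rw [inner_sub_right, inner_smul_right, hfe] at h1
    linarith
  exact sub_eq_zero.1 (inner_self_eq_zero.1 (hall (f - f')))

theorem hausdorff_measure_nonsmooth_points_eq_zero {N : ℕ} (hN : 1 ≤ N)
    (g : EuclideanSpace ℝ (Fin N) → ℝ) (hg : IsNorm g) :
    μH[N - 1] {x : EuclideanSpace ℝ (Fin N) | g x = 1 ∧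
      ∃ f f', f ≠ f' ∧ IsNormingFunctional g f x ∧ IsNormingFunctional g f' x} = 0 := by
  set b := EuclideanSpace.basisFun (Fin N) ℝ with hb
  have h1 : ∀ i, _ := fun i => half_null hN g hg (b i) (b.norm_eq_one i)
  have h2 : ∀ i, _ := fun i => half_null hN g hg (-b i) (by rw [norm_neg]; exact b.norm_eq_one i)
  refine measure_mono_null ?_ (measure_union_null (measure_iUnion_null h1) (measure_iUnion_null h2))
  rintro x ⟨hx, hff⟩
  have hx0 : x ≠ 0 := by
    rintro rfl
    rw [hg.zero'] at hx
    exact zero_ne_one hx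
  obtain ⟨i, hi⟩ : ∃ i, ⟪b i, x⟫ ≠ 0 := by
    by_contra! hcon
    apply hx0
    rw [← b.sum_repr' x]
    simp [hcon]
  rcases lt_or_gt_of_ne hi with hi | hi
  · right
    refine Set.mem_iUnion.2 ⟨i, ?_, hx, hff⟩
    rw [inner_neg_left]; linarith
  · left
    exact Set.mem_iUnion.2 ⟨i, hi, hx, hff⟩
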